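/- Let T ≥ 2 be a natural number and ε > 0, and let F be the cumulative distribution function of the chi-square distribution with T − 1 degrees of freedom. Then (1 − F((ε/n)^{2/T}))^n → 0 as n → ∞. -/

import Mathlib

open MeasureTheory ProbabilityTheory Filter

/-- The chi-square distribution with `k` degrees of freedom (`k` a real parameter):
the Gamma distribution with shape `k/2` and rate `1/2`. -/
noncomputable def chiSqMeasure (k : ℝ) : Measure ℝ :=
  gammaMeasure (k / 2) (1 / 2)

/-- The cumulative distribution function of the chi-square distribution with `k`
degrees of freedom. -/
noncomputable def chiSqCDF (k : ℝ) (u : ℝ) : ℝ :=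
  (chiSqMeasure k (Set.Iic u)).toReal

/-!
Bounding `exp (-(r * x))` below by `exp (-(r * u))` in the density of the gamma distribution with
shape `a` and rate `r` shows that its cumulative distribution function at `u` is at least
`(r * u) ^ a * exp (-(r * u)) / Γ (a + 1)`, hence by monotonicity at least a positive multiple of
`min (u ^ a) 1`. At `u = (ε / n) ^ p`, the power `u ^ a` is of order `n ^ (-(a * p))`, which
outweighs `1 / n` when `a * p < 1`; and `(1 - x) ^ n ≤ exp (-(n * x))` tends to `0` as soon as
`n * x` tends to infinity. For the chi-square distribution with `T - 1` degrees of freedom and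
`p = 2 / T`, `a * p = (T - 1) / T < 1`.
-/

theorem tendsto_one_sub_pow_nhds_zero {ι : Type*} {l : Filter ι} {m : ι → ℕ} {x : ι → ℝ}
    (hx : ∀ᶠ i in l, x i ≤ 1) (hmx : Tendsto (fun i => m i * x i) l atTop) :
    Tendsto (fun i => (1 - x i) ^ m i) l (nhds 0) := by
  refine squeeze_zero' ?_ ?_ (Real.tendsto_exp_neg_atTop_nhds_zero.comp hmx)
  · filter_upwards [hx] with i hi using pow_nonneg (sub_nonneg.2 hi) _
  · filter_upwards [hx] with i hi
    calc (1 - x i) ^ m i ≤ Real.exp (-x i) ^ m i :=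
          pow_le_pow_left₀ (sub_nonneg.2 hi) (Real.one_sub_le_exp_neg _) _
      _ = Real.exp (-(m i * x i)) := by rw [← Real.exp_nat_mul, mul_neg]

theorem tendsto_mul_div_rpow_atTop {ε s : ℝ} (hε : 0 < ε) (hs : s < 1) :
    Tendsto (fun x : ℝ => x * (ε / x) ^ s) atTop atTop := by
  have hlim : Tendsto (fun x : ℝ => ε ^ s * x ^ (1 - s)) atTop atTop :=
    (tendsto_rpow_atTop (sub_pos.2 hs)).const_mul_atTop (by positivity)
  refine hlim.congr' ?_
  filter_upwards [eventually_gt_atTop 0] with x hx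
  rw [Real.div_rpow hε.le hx.le, Real.rpow_sub hx, Real.rpow_one]
  ring

section GammaDistribution

variable {a r : ℝ}

theorem integrable_gammaPDFReal (ha : 0 < a) (hr : 0 < r) : Integrable (gammaPDFReal a r) := by
  refine ⟨(measurable_gammaPDFReal a r).aestronglyMeasurable, ?_⟩
  rw [hasFiniteIntegral_iff_ofReal (ae_of_all _ (gammaPDFReal_nonneg ha hr))]
  exact (lintegral_gammaPDF_eq_one ha hr).trans_lt ENNReal.one_lt_top

theorem rpow_mul_exp_neg_div_Gamma_le_cdf_gammaMeasure (ha : 0 < a) (hr : 0 < r) {u : ℝ}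
    (hu : 0 ≤ u) :
    (r * u) ^ a * Real.exp (-(r * u)) / Real.Gamma (a + 1) ≤ cdf (gammaMeasure a r) u := by
  have : 0 < Real.Gamma a := Real.Gamma_pos_of_pos ha
  set K : ℝ := r ^ a / Real.Gamma a * Real.exp (-(r * u)) with hK
  have hpow : IntegrableOn (fun x : ℝ => K * x ^ (a - 1)) (Set.Ioc 0 u) :=
    ((intervalIntegrable_iff_integrableOn_Ioc_of_le hu).1
      (intervalIntegral.intervalIntegrable_rpow' (by linarith))).const_mul K
  have hpdf : Integrable (gammaPDFReal a r) := integrable_gammaPDFReal ha hr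
  have hle : ∀ x ∈ Set.Ioc 0 u, K * x ^ (a - 1) ≤ gammaPDFReal a r x := by
    rintro x ⟨hx, hxu⟩
    rw [gammaPDFReal, if_pos hx.le, hK, mul_right_comm]
    gcongr
  calc (r * u) ^ a * Real.exp (-(r * u)) / Real.Gamma (a + 1)
      = K * ∫ x in (0 : ℝ)..u, x ^ (a - 1) := by
        rw [integral_rpow (Or.inl (by linarith)), sub_add_cancel, Real.zero_rpow ha.ne',
          Real.mul_rpow hr.le hu, Real.Gamma_add_one ha.ne', hK]
        field_simp
        ring
    _ = ∫ x in Set.Ioc 0 u, K * x ^ (a - 1) := by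
        rw [intervalIntegral.integral_of_le hu, integral_const_mul]
    _ ≤ ∫ x in Set.Ioc 0 u, gammaPDFReal a r x :=
        setIntegral_mono_on hpow hpdf.integrableOn measurableSet_Ioc hle
    _ ≤ ∫ x in Set.Iic u, gammaPDFReal a r x :=
        setIntegral_mono_set hpdf.integrableOn (ae_of_all _ (gammaPDFReal_nonneg ha hr))
          Set.Ioc_subset_Iic_self.eventuallyLE
    _ = cdf (gammaMeasure a r) u := (cdf_gammaMeasure_eq_integral ha hr u).symm

theorem exists_pos_mul_min_rpow_one_le_cdf_gammaMeasure (ha : 0 < a) (hr : 0 < r) :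
    ∃ c > 0, ∀ u, 0 ≤ u → c * min (u ^ a) 1 ≤ cdf (gammaMeasure a r) u := by
  have : 0 < Real.Gamma (a + 1) := Real.Gamma_pos_of_pos (by linarith)
  refine ⟨r ^ a * Real.exp (-r) / Real.Gamma (a + 1), by positivity, fun u hu => ?_⟩
  have hv : 0 ≤ min u 1 := le_min hu zero_le_one
  have hmin : min (u ^ a) 1 = min u 1 ^ a := by
    rw [(Real.monotoneOn_rpow_Ici_of_exponent_nonneg ha.le).map_min hu (zero_le_one' ℝ),
      Real.one_rpow]
  calc r ^ a * Real.exp (-r) / Real.Gamma (a + 1) * min (u ^ a) 1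
      = (r * min u 1) ^ a * Real.exp (-r) / Real.Gamma (a + 1) := by
        rw [hmin, Real.mul_rpow hr.le hv]
        ring
    _ ≤ (r * min u 1) ^ a * Real.exp (-(r * min u 1)) / Real.Gamma (a + 1) := by
        gcongr
        exact mul_le_of_le_one_right hr.le (min_le_right u 1)
    _ ≤ cdf (gammaMeasure a r) (min u 1) :=
        rpow_mul_exp_neg_div_Gamma_le_cdf_gammaMeasure ha hr hv
    _ ≤ cdf (gammaMeasure a r) u := monotone_cdf _ (min_le_left u 1)

theorem tendsto_one_sub_cdf_gammaMeasure_pow {ι : Type*} {l : Filter ι} {m : ι → ℕ} {u : ι → ℝ}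
    (ha : 0 < a) (hr : 0 < r) (hu : ∀ᶠ i in l, 0 ≤ u i) (hm : Tendsto m l atTop)
    (hmu : Tendsto (fun i => m i * u i ^ a) l atTop) :
    Tendsto (fun i => (1 - cdf (gammaMeasure a r) (u i)) ^ m i) l (nhds 0) := by
  obtain ⟨c, hc, hcdf⟩ := exists_pos_mul_min_rpow_one_le_cdf_gammaMeasure ha hr
  have hmin : Tendsto (fun i => min (m i * u i ^ a) (m i : ℝ)) l atTop := by
    refine tendsto_atTop.2 fun b => ?_
    filter_upwards [hmu.eventually_ge_atTop b,
      (tendsto_natCast_atTop_atTop.comp hm).eventually_ge_atTop b] with i hpow_ge hm_ge using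
      le_min hpow_ge hm_ge
  refine tendsto_one_sub_pow_nhds_zero (Eventually.of_forall fun i => cdf_le_one _ _) ?_
  refine tendsto_atTop_mono' l ?_ (hmin.const_mul_atTop hc)
  filter_upwards [hu] with i hi
  calc c * min (m i * u i ^ a) (m i : ℝ) = m i * (c * min (u i ^ a) 1) := by
        rw [mul_left_comm, mul_min_of_nonneg _ _ (Nat.cast_nonneg (m i)), mul_one]
    _ ≤ m i * cdf (gammaMeasure a r) (u i) := by
        gcongr
        exact hcdf _ hi

end GammaDistribution

theorem chiSqCDF_eq_cdf_gammaMeasure {k : ℝ} (hk : 0 < k) (u : ℝ) :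
    chiSqCDF k u = cdf (gammaMeasure (k / 2) (1 / 2)) u := by
  have : IsProbabilityMeasure (gammaMeasure (k / 2) (1 / 2)) :=
    isProbabilityMeasure_gammaMeasure (half_pos hk) one_half_pos
  rw [cdf_eq_real, chiSqCDF, chiSqMeasure, measureReal_def]

theorem stmt_12_general {a r p ε : ℝ} (ha : 0 < a) (hr : 0 < r) (hap : a * p < 1) (hε : 0 < ε) :
    Tendsto (fun n : ℕ => (1 - cdf (gammaMeasure a r) ((ε / n) ^ p)) ^ n) atTop (nhds 0) := by
  have hpow : ∀ n : ℕ, (n : ℝ) * ((ε / n) ^ p) ^ a = n * (ε / n) ^ (a * p) := fun n => by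
    rw [mul_comm a p, Real.rpow_mul (by positivity)]
  refine tendsto_one_sub_cdf_gammaMeasure_pow ha hr
    (Eventually.of_forall fun n => by positivity) tendsto_id ?_
  simpa only [id, hpow, Function.comp_def] using
    (tendsto_mul_div_rpow_atTop hε hap).comp tendsto_natCast_atTop_atTop

/-- Deterministic core of Lemma 1: for `T ≥ 2` and `ε > 0`,
`(1 − F((ε/n)^{2/T}))ⁿ → 0` as `n → ∞`, where `F` is the chi-square(T−1) CDF. -/
theorem stmt_12 (T : ℕ) (hT : 2 ≤ T) (ε : ℝ) (hε : 0 < ε) :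
    Tendsto
      (fun n : ℕ =>
        (1 - chiSqCDF ((T : ℝ) - 1) ((ε / (n : ℝ)) ^ ((2 : ℝ) / (T : ℝ)))) ^ n)
      atTop (nhds 0) := by
  have hT' : (2 : ℝ) ≤ T := by exact_mod_cast hT
  have hk : 0 < (T : ℝ) - 1 := by linarith
  have hap : ((T : ℝ) - 1) / 2 * (2 / T) < 1 := by
    rw [div_mul_div_cancel₀ two_ne_zero, div_lt_one (by linarith)]
    linarith
  simpa only [chiSqCDF_eq_cdf_gammaMeasure hk] using
    stmt_12_general (half_pos hk) one_half_pos hap hε
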